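/- Let n ≥ 3 and let f : ℝ → (0,∞) be a C³ function. On the open set {x ∈ ℝⁿ : x¹ > 0}, let k be the Riemannian metric with diagonal matrix k₁₁ = 1, k₂₂ = f(x¹)², k_{αα} = 1 for 3 ≤ α ≤ n, and k_{ij} = 0 for i ≠ j. Then the Cotton tensor of k satisfies C₂₂₁ = (1/(n−1)) ( f'(x¹) f''(x¹) − f(x¹) f'''(x¹) ) at every point with x¹ > 0; in particular the covariant derivatives of the Schouten tensor satisfy P₂₂,₁ = (1/(n−1))(f' f'' − f f''') and P₂₁,₂ = 0. -/

import Mathlib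

noncomputable section

open scoped BigOperators

/-- Coordinate partial derivative `∂_i F` of a scalar function on `ℝᵐ`. -/
def pd {m : ℕ} (i : Fin m) (F : (Fin m → ℝ) → ℝ) (x : Fin m → ℝ) : ℝ :=
  fderiv ℝ F x (Pi.single i 1)

/-- Christoffel symbols `Γ^k_{ij} = ½ Σ_l g^{kl}(∂_i g_{jl} + ∂_j g_{il} − ∂_l g_{ij})`. -/
def christoffel {m : ℕ} (g : (Fin m → ℝ) → Matrix (Fin m) (Fin m) ℝ)
    (k i j : Fin m) (x : Fin m → ℝ) : ℝ :=
  (1 / 2) * ∑ l, (g x)⁻¹ k l *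
    (pd i (fun y => g y j l) x + pd j (fun y => g y i l) x - pd l (fun y => g y i j) x)

/-- Riemann curvature tensor
`R_{ijkl} = Σ_m g_{lm}(∂_i Γ^m_{jk} − ∂_j Γ^m_{ik} + Σ_p (Γ^m_{ip} Γ^p_{jk} − Γ^m_{jp} Γ^p_{ik}))`. -/
def riemann {m : ℕ} (g : (Fin m → ℝ) → Matrix (Fin m) (Fin m) ℝ)
    (i j k l : Fin m) (x : Fin m → ℝ) : ℝ :=
  ∑ mm, g x l mm *
    (pd i (christoffel g mm j k) x - pd j (christoffel g mm i k) x
      + ∑ p, (christoffel g mm i p x * christoffel g p j k x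
              - christoffel g mm j p x * christoffel g p i k x))

/-- Ricci tensor `Rc_{jk} = Σ_{i,l} g^{il} R_{ijkl}`. -/
def ricci {m : ℕ} (g : (Fin m → ℝ) → Matrix (Fin m) (Fin m) ℝ)
    (j k : Fin m) (x : Fin m → ℝ) : ℝ :=
  ∑ i, ∑ l, (g x)⁻¹ i l * riemann g i j k l x

/-- Scalar curvature `S = Σ_{j,k} g^{jk} Rc_{jk}`. -/
def scalarCurv {m : ℕ} (g : (Fin m → ℝ) → Matrix (Fin m) (Fin m) ℝ)
    (x : Fin m → ℝ) : ℝ :=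
  ∑ j, ∑ k, (g x)⁻¹ j k * ricci g j k x

/-- Schouten tensor `P_{ij} = (1/(m−2))(Rc_{ij} − (S/(2(m−1))) g_{ij})`. -/
def schouten {m : ℕ} (g : (Fin m → ℝ) → Matrix (Fin m) (Fin m) ℝ)
    (i j : Fin m) (x : Fin m → ℝ) : ℝ :=
  (1 / ((m : ℝ) - 2)) * (ricci g i j x - scalarCurv g x / (2 * ((m : ℝ) - 1)) * g x i j)

/-- Weyl tensor `W_{ijkl} = R_{ijkl} − (P ∧○ g)_{ijkl}`, where `∧○` is the Kulkarni–Nomizu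
product `(a ∧○ b)_{ijkl} = a_{il} b_{jk} + a_{jk} b_{il} − a_{ik} b_{jl} − a_{jl} b_{ik}`. -/
def weyl {m : ℕ} (g : (Fin m → ℝ) → Matrix (Fin m) (Fin m) ℝ)
    (i j k l : Fin m) (x : Fin m → ℝ) : ℝ :=
  riemann g i j k l x -
    (schouten g i l x * g x j k + schouten g j k x * g x i l
      - schouten g i k x * g x j l - schouten g j l x * g x i k)

/-- Covariant derivative of the Schouten tensor:
`P_{ij,k} = ∂_k P_{ij} − Σ_l Γ^l_{ki} P_{lj} − Σ_l Γ^l_{kj} P_{il}`. -/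
def schoutenCov {m : ℕ} (g : (Fin m → ℝ) → Matrix (Fin m) (Fin m) ℝ)
    (i j k : Fin m) (x : Fin m → ℝ) : ℝ :=
  pd k (fun y => schouten g i j y) x
    - ∑ l, christoffel g l k i x * schouten g l j x
    - ∑ l, christoffel g l k j x * schouten g i l x

/-- Cotton tensor `C_{ijk} = P_{ij,k} − P_{ik,j}`. -/
def cotton {m : ℕ} (g : (Fin m → ℝ) → Matrix (Fin m) (Fin m) ℝ)
    (i j k : Fin m) (x : Fin m → ℝ) : ℝ :=
  schoutenCov g i j k x - schoutenCov g i k j x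

theorem aux_pd {m : ℕ} (z i : Fin m) (φ : ℝ → ℝ) (x : Fin m → ℝ)
    (h : DifferentiableAt ℝ φ (x z)) :
    pd i (fun y => φ (y z)) x = if i = z then deriv φ (x z) else 0 := by
  unfold pd
  have h1 : HasFDerivAt (fun y : Fin m → ℝ => y z)
      (ContinuousLinearMap.proj (R := ℝ) (φ := fun _ : Fin m => ℝ) z) x :=
    (ContinuousLinearMap.proj (R := ℝ) (φ := fun _ : Fin m => ℝ) z).hasFDerivAt
  have h2 := h.hasDerivAt.comp_hasFDerivAt x h1
  have h3 : fderiv ℝ (fun y : Fin m → ℝ => φ (y z)) x = _ := h2.fderiv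
  rw [h3]
  by_cases hi : i = z
  · subst hi; simp
  · simp [hi, Pi.single_apply, Ne.symm hi]

theorem aux_sum {m : ℕ} (z o : Fin m) (hzo : z ≠ o) (F : Fin m → ℝ)
    (h : ∀ i, i ≠ z → i ≠ o → F i = 0) : ∑ i, F i = F z + F o := by
  apply Finset.sum_eq_add z o hzo
  · intro c _ hc; exact h c hc.1 hc.2
  · simp
  · simp

/-- the metric -/
def auxM {m : ℕ} (z o : Fin m) (f : ℝ → ℝ) (x : Fin m → ℝ) : Matrix (Fin m) (Fin m) ℝ :=
  Matrix.diagonal (fun i => if i = o then f (x z) ^ 2 else 1)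

theorem aux_inv {m : ℕ} (z o : Fin m) (f : ℝ → ℝ) (hf : ∀ t, 0 < f t) (x : Fin m → ℝ) :
    (auxM z o f x)⁻¹ = Matrix.diagonal (fun i => if i = o then (f (x z) ^ 2)⁻¹ else 1) := by
  apply Matrix.inv_eq_right_inv
  unfold auxM
  rw [Matrix.diagonal_mul_diagonal, ← Matrix.diagonal_one]
  congr 1
  funext i
  have := (hf (x z)).ne'
  by_cases h : i = o <;> simp [h, this]

theorem aux_pdM {m : ℕ} (z o : Fin m) (f : ℝ → ℝ) (hf : ContDiff ℝ 3 f)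
    (a i j : Fin m) (x : Fin m → ℝ) :
    pd a (fun y => auxM z o f y i j) x =
      if a = z ∧ i = o ∧ j = o then 2 * f (x z) * deriv f (x z) else 0 := by
  have hd : Differentiable ℝ f := hf.differentiable (by norm_num)
  have e : (fun y => auxM z o f y i j) =
      fun y : Fin m → ℝ => (fun t => if i = o ∧ j = o then f t ^ 2 else if i = j then 1 else 0)
        (y z) := by
    funext y
    by_cases hij : i = j
    · subst hij; by_cases hi : i = o <;> simp [auxM, hi]
    · have : ¬ (i = o ∧ j = o) := fun h => hij (h.1.trans h.2.symm)
      simp [auxM, hij, this]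
  rw [e]
  by_cases h : i = o ∧ j = o
  · simp only [h, and_self, if_true]
    have hh : HasDerivAt (fun t => f t ^ 2) (2 * f (x z) * deriv f (x z)) (x z) := by
      have h := (hd (x z)).hasDerivAt.fun_pow 2
      simpa using h
    rw [aux_pd z a (fun t => f t ^ 2) x hh.differentiableAt, hh.deriv]
    simp
  · simp only [h, and_false, if_false]
    rw [aux_pd z a (fun t => if i = j then 1 else 0) x (by fun_prop)]
    simp

/-- Christoffel closed form -/
def auxG {m : ℕ} (z o : Fin m) (f : ℝ → ℝ) (a i j : Fin m) (t : ℝ) : ℝ :=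
  if a = o ∧ ((i = z ∧ j = o) ∨ (i = o ∧ j = z)) then deriv f t / f t
  else if a = z ∧ i = o ∧ j = o then - (f t * deriv f t) else 0

theorem aux_chr {m : ℕ} (z o : Fin m) (hzo : z ≠ o) (f : ℝ → ℝ) (hp : ∀ t, 0 < f t)
    (hf : ContDiff ℝ 3 f) (a i j : Fin m) :
    christoffel (auxM z o f) a i j = fun x => auxG z o f a i j (x z) := by
  funext x
  unfold christoffel
  simp only [aux_pdM z o f hf, aux_inv z o f hp]
  rw [Finset.sum_eq_single a]
  · have := (hp (x z)).ne'
    have hoz := hzo.symm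
    unfold auxG
    by_cases ha : a = o <;> by_cases ha' : a = z <;> by_cases hi : i = o <;>
      by_cases hi' : i = z <;> by_cases hj : j = o <;> by_cases hj' : j = z <;>
      simp_all <;> field_simp
  · intro b _ hb
    simp [Matrix.diagonal_apply_ne _ hb.symm]
  · simp

/-- derivative of Christoffel closed form -/
def auxD {m : ℕ} (z o : Fin m) (f : ℝ → ℝ) (a i j : Fin m) (t : ℝ) : ℝ :=
  if a = o ∧ ((i = z ∧ j = o) ∨ (i = o ∧ j = z)) then
    (deriv (deriv f) t * f t - deriv f t * deriv f t) / f t ^ 2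
  else if a = z ∧ i = o ∧ j = o then - (deriv f t * deriv f t + f t * deriv (deriv f) t) else 0

theorem aux_d1 (f : ℝ → ℝ) (hf : ContDiff ℝ 3 f) : ContDiff ℝ 2 (deriv f) :=
  ((contDiff_succ_iff_deriv (n := 2)).1 (hf.of_le (by norm_num))).2.2

theorem aux_d2 (f : ℝ → ℝ) (hf : ContDiff ℝ 3 f) : ContDiff ℝ 1 (deriv (deriv f)) :=
  ((contDiff_succ_iff_deriv (n := 1)).1 ((aux_d1 f hf).of_le (by norm_num))).2.2

theorem aux_dG {m : ℕ} (z o : Fin m) (f : ℝ → ℝ) (hp : ∀ t, 0 < f t)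
    (hf : ContDiff ℝ 3 f) (a i j : Fin m) (t : ℝ) :
    HasDerivAt (auxG z o f a i j) (auxD z o f a i j t) t := by
  have h0 : HasDerivAt f (deriv f t) t :=
    ((hf.differentiable (by norm_num)) t).hasDerivAt
  have h1 : HasDerivAt (deriv f) (deriv (deriv f) t) t :=
    (((aux_d1 f hf).differentiable (by norm_num)) t).hasDerivAt
  unfold auxG auxD
  split_ifs
  · exact h1.div h0 (hp t).ne'
  · exact (h0.mul h1).neg
  · exact hasDerivAt_const t 0

theorem aux_pdG {m : ℕ} (z o : Fin m) (f : ℝ → ℝ) (hp : ∀ t, 0 < f t)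
    (hf : ContDiff ℝ 3 f) (b a i j : Fin m) (x : Fin m → ℝ) :
    pd b (fun y => auxG z o f a i j (y z)) x = if b = z then auxD z o f a i j (x z) else 0 := by
  rw [aux_pd z b (auxG z o f a i j) x (aux_dG z o f hp hf a i j _).differentiableAt,
    (aux_dG z o f hp hf a i j _).deriv]

theorem aux_ric0 {m : ℕ} (z o : Fin m) (hzo : z ≠ o) (f : ℝ → ℝ) (hp : ∀ t, 0 < f t)
    (hf : ContDiff ℝ 3 f) (j k : Fin m) (x : Fin m → ℝ) :
    ricci (auxM z o f) j k x = ∑ i, ((if i = z then auxD z o f i j k (x z) else 0)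
      - (if j = z then auxD z o f i i k (x z) else 0)
      + ∑ p, (auxG z o f i i p (x z) * auxG z o f p j k (x z)
        - auxG z o f i j p (x z) * auxG z o f p i k (x z))) := by
  unfold ricci riemann
  simp only [aux_chr z o hzo f hp hf, aux_pdG z o f hp hf, aux_inv z o f hp]
  refine Finset.sum_congr rfl fun i _ => ?_
  rw [Finset.sum_eq_single i]
  · rw [Finset.sum_eq_single i]
    · rw [← mul_assoc]
      have : (Matrix.diagonal (fun i => if i = o then (f (x z) ^ 2)⁻¹ else 1) i i : ℝ)
          * auxM z o f x i i = 1 := by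
        have := (hp (x z)).ne'
        by_cases h : i = o <;> simp [auxM, h, this]
      rw [this, one_mul]
    · intro b _ hb
      simp [auxM, Matrix.diagonal_apply_ne _ hb.symm]
    · simp
  · intro b _ hb
    simp [Matrix.diagonal_apply_ne _ hb.symm]
  · simp

/-- Ricci closed form -/
def auxR {m : ℕ} (z o : Fin m) (f : ℝ → ℝ) (j k : Fin m) (t : ℝ) : ℝ :=
  if j = z ∧ k = z then - (deriv (deriv f) t / f t)
  else if j = o ∧ k = o then - (f t * deriv (deriv f) t) else 0

theorem aux_ric {m : ℕ} (z o : Fin m) (hzo : z ≠ o) (f : ℝ → ℝ) (hp : ∀ t, 0 < f t)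
    (hf : ContDiff ℝ 3 f) (j k : Fin m) (x : Fin m → ℝ) :
    ricci (auxM z o f) j k x = auxR z o f j k (x z) := by
  rw [aux_ric0 z o hzo f hp hf]
  have hoz := hzo.symm
  have hne := (hp (x z)).ne'
  have hs : ∀ i, ∑ p, (auxG z o f i i p (x z) * auxG z o f p j k (x z)
        - auxG z o f i j p (x z) * auxG z o f p i k (x z)) =
      (auxG z o f i i z (x z) * auxG z o f z j k (x z)
        - auxG z o f i j z (x z) * auxG z o f z i k (x z)) +
      (auxG z o f i i o (x z) * auxG z o f o j k (x z)
        - auxG z o f i j o (x z) * auxG z o f o i k (x z)) := by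
    intro i
    apply aux_sum z o hzo
    intro p h1 h2
    simp [auxG, h1, h2]
  simp only [hs]
  rw [aux_sum z o hzo _ (by
    intro i h1 h2
    simp [auxG, auxD, h1, h2])]
  unfold auxG auxD auxR
  by_cases hi : j = o <;> by_cases hi' : j = z <;> by_cases hj : k = o <;> by_cases hj' : k = z <;>
      simp_all <;> field_simp <;> ring

theorem aux_scal {m : ℕ} (z o : Fin m) (hzo : z ≠ o) (f : ℝ → ℝ) (hp : ∀ t, 0 < f t)
    (hf : ContDiff ℝ 3 f) (x : Fin m → ℝ) :
    scalarCurv (auxM z o f) x = - 2 * (deriv (deriv f) (x z) / f (x z)) := by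
  unfold scalarCurv
  simp only [aux_ric z o hzo f hp hf, aux_inv z o f hp]
  have hoz := hzo.symm
  have hne := (hp (x z)).ne'
  have hs : ∀ j, ∑ k, Matrix.diagonal (fun i => if i = o then (f (x z) ^ 2)⁻¹ else 1) j k *
      auxR z o f j k (x z) = (if j = o then (f (x z) ^ 2)⁻¹ else 1) * auxR z o f j j (x z) := by
    intro j
    rw [Finset.sum_eq_single j]
    · simp
    · intro b _ hb
      simp [Matrix.diagonal_apply_ne _ hb.symm]
    · simp
  simp only [hs]
  rw [aux_sum z o hzo _ (by
    intro i h1 h2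
    simp [auxR, h1, h2])]
  simp [auxR, hzo, hoz]
  field_simp
  ring

theorem aux_sch {m : ℕ} (z o : Fin m) (hzo : z ≠ o) (f : ℝ → ℝ) (hp : ∀ t, 0 < f t)
    (hf : ContDiff ℝ 3 f) (i j : Fin m) (x : Fin m → ℝ) :
    schouten (auxM z o f) i j x = (1 / ((m : ℝ) - 2)) * (auxR z o f i j (x z)
      - (- 2 * (deriv (deriv f) (x z) / f (x z))) / (2 * ((m : ℝ) - 1)) * auxM z o f x i j) := by
  unfold schouten
  rw [aux_ric z o hzo f hp hf, aux_scal z o hzo f hp hf]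

theorem aux_sch_oo {m : ℕ} (hm : 3 ≤ m) (z o : Fin m) (hzo : z ≠ o) (f : ℝ → ℝ)
    (hp : ∀ t, 0 < f t) (hf : ContDiff ℝ 3 f) (x : Fin m → ℝ) :
    schouten (auxM z o f) o o x = - (1 / ((m : ℝ) - 1)) * (f (x z) * deriv (deriv f) (x z)) := by
  rw [aux_sch z o hzo f hp hf]
  have h3 : (3 : ℝ) ≤ m := by exact_mod_cast hm
  have h1 : (m : ℝ) - 1 ≠ 0 := by linarith
  have h2 : (m : ℝ) - 2 ≠ 0 := by linarith
  have hne := (hp (x z)).ne'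
  simp [auxR, auxM, hzo.symm]
  field_simp
  ring

theorem aux_sch_zz {m : ℕ} (hm : 3 ≤ m) (z o : Fin m) (hzo : z ≠ o) (f : ℝ → ℝ)
    (hp : ∀ t, 0 < f t) (hf : ContDiff ℝ 3 f) (x : Fin m → ℝ) :
    schouten (auxM z o f) z z x = - (1 / ((m : ℝ) - 1)) * (deriv (deriv f) (x z) / f (x z)) := by
  rw [aux_sch z o hzo f hp hf]
  have h3 : (3 : ℝ) ≤ m := by exact_mod_cast hm
  have h1 : (m : ℝ) - 1 ≠ 0 := by linarith
  have h2 : (m : ℝ) - 2 ≠ 0 := by linarith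
  have hne := (hp (x z)).ne'
  simp [auxR, auxM, hzo]
  field_simp
  ring

theorem aux_sch_oz {m : ℕ} (z o : Fin m) (hzo : z ≠ o) (f : ℝ → ℝ)
    (hp : ∀ t, 0 < f t) (hf : ContDiff ℝ 3 f) (x : Fin m → ℝ) :
    schouten (auxM z o f) o z x = 0 := by
  rw [aux_sch z o hzo f hp hf]
  simp [auxR, auxM, hzo, hzo.symm]

theorem aux_cov1 {m : ℕ} (hm : 3 ≤ m) (z o : Fin m) (hzo : z ≠ o) (f : ℝ → ℝ)
    (hp : ∀ t, 0 < f t) (hf : ContDiff ℝ 3 f) (x : Fin m → ℝ) :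
    schoutenCov (auxM z o f) o o z x = (1 / ((m : ℝ) - 1)) *
      (deriv f (x z) * deriv (deriv f) (x z) - f (x z) * deriv (deriv (deriv f)) (x z)) := by
  unfold schoutenCov
  have hne := (hp (x z)).ne'
  have h0 : HasDerivAt f (deriv f (x z)) (x z) :=
    ((hf.differentiable (by norm_num)) _).hasDerivAt
  have h2 : HasDerivAt (deriv (deriv f)) (deriv (deriv (deriv f)) (x z)) (x z) :=
    (((aux_d2 f hf).differentiable (by norm_num)) _).hasDerivAt
  have hd : HasDerivAt (fun t => - (1 / ((m : ℝ) - 1)) * (f t * deriv (deriv f) t)) _ (x z) :=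
    (h0.mul h2).const_mul (- (1 / ((m : ℝ) - 1)))
  simp only [aux_sch_oo hm z o hzo f hp hf, aux_chr z o hzo f hp hf]
  rw [aux_pd z z (fun t => - (1 / ((m : ℝ) - 1)) * (f t * deriv (deriv f) t)) x
    hd.differentiableAt, hd.deriv]
  rw [Finset.sum_eq_single o (by intro b _ hb; simp [auxG, hb, hzo]) (by simp),
    Finset.sum_eq_single o (by intro b _ hb; simp [auxG, hb, hzo]) (by simp),
    aux_sch_oo hm z o hzo f hp hf]
  simp [auxG]
  field_simp
  ring

theorem aux_cov2 {m : ℕ} (hm : 3 ≤ m) (z o : Fin m) (hzo : z ≠ o) (f : ℝ → ℝ)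
    (hp : ∀ t, 0 < f t) (hf : ContDiff ℝ 3 f) (x : Fin m → ℝ) :
    schoutenCov (auxM z o f) o z o x = 0 := by
  unfold schoutenCov
  have hne := (hp (x z)).ne'
  have hoz := hzo.symm
  simp only [aux_sch_oz z o hzo f hp hf, aux_chr z o hzo f hp hf]
  rw [Finset.sum_eq_single z (by intro b _ hb; simp [auxG, hb, hoz]) (by simp),
    Finset.sum_eq_single o (by intro b _ hb; simp [auxG, hb, hoz, hzo]) (by simp),
    aux_sch_oo hm z o hzo f hp hf, aux_sch_zz hm z o hzo f hp hf]
  simp [auxG, pd, hzo]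
  field_simp
  ring

/-- Let `n ≥ 3` and `f : ℝ → (0,∞)` of class `C³`. For the metric
`k = (dx¹)² + f(x¹)²(dx²)² + (dx³)² + ⋯ + (dxⁿ)²` on `{x ∈ ℝⁿ : x¹ > 0}`, the covariant
derivatives of the Schouten tensor satisfy `P₂₂,₁ = (1/(n−1))(f' f'' − f f''')` and
`P₂₁,₂ = 0`, hence the Cotton tensor satisfies `C₂₂₁ = (1/(n−1))(f' f'' − f f''')`. -/
theorem stmt16 (n : ℕ) (hn : 3 ≤ n) (f : ℝ → ℝ) (hfpos : ∀ t, 0 < f t) (hf : ContDiff ℝ 3 f)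
    (k : (Fin n → ℝ) → Matrix (Fin n) (Fin n) ℝ)
    (hk : ∀ x, k x = Matrix.diagonal (fun i =>
      if i = (⟨1, by omega⟩ : Fin n) then f (x ⟨0, by omega⟩) ^ 2 else 1)) :
    ∀ x : Fin n → ℝ, 0 < x ⟨0, by omega⟩ →
      schoutenCov k ⟨1, by omega⟩ ⟨1, by omega⟩ ⟨0, by omega⟩ x
        = (1 / ((n : ℝ) - 1)) * (deriv f (x ⟨0, by omega⟩) * deriv (deriv f) (x ⟨0, by omega⟩)
            - f (x ⟨0, by omega⟩) * deriv (deriv (deriv f)) (x ⟨0, by omega⟩)) ∧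
      schoutenCov k ⟨1, by omega⟩ ⟨0, by omega⟩ ⟨1, by omega⟩ x = 0 ∧
      cotton k ⟨1, by omega⟩ ⟨1, by omega⟩ ⟨0, by omega⟩ x
        = (1 / ((n : ℝ) - 1)) * (deriv f (x ⟨0, by omega⟩) * deriv (deriv f) (x ⟨0, by omega⟩)
            - f (x ⟨0, by omega⟩) * deriv (deriv (deriv f)) (x ⟨0, by omega⟩)) := by
  have hk' : k = auxM ⟨0, by omega⟩ ⟨1, by omega⟩ f := funext hk
  have hzo : (⟨0, by omega⟩ : Fin n) ≠ ⟨1, by omega⟩ := by simp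
  intro x _
  have h1 := aux_cov1 hn _ _ hzo f hfpos hf x
  have h2 := aux_cov2 hn _ _ hzo f hfpos hf x
  rw [hk']
  refine ⟨h1, h2, ?_⟩
  unfold cotton
  rw [h1, h2, sub_zero]
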